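/- arXiv:2005.02695 — 2 statements merged into one kernel-verified Lean document; each statement's English description precedes it below -/
import Mathlib

section
/- Let E ≠ {0} be a z-invariant linear subspace of Hol(𝔻) with T(E) ⊂ E such that I_E − λT|_E : E → E is bijective for every λ ∈ 𝔻, let λ ∈ 𝔻, let M be a nontrivial z-invariant linear subspace of E, let π : E → E/M be the canonical surjection, and let S_M : E/M → E/M be the linear map defined by S_M ∘ π = π ∘ S|_E. Then M has the division property at λ if and only if S_M − λI_{E/M} is one-to-one; and in this situation S_M − λI_{E/M} is a bijection of E/M whose inverse U_λ = (S_M − λI_{E/M})^{-1} satisfies U_λ ∘ π ∘ (S|_E − λI_E) = π. -/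
noncomputable section

open Metric Set Filter Topology
open scoped Classical

/-- Functions holomorphic on the open unit disc, normalized to vanish outside it.
This is our model of `Hol(𝔻)`. -/
def HolDisc : Set (ℂ → ℂ) :=
  {f | DifferentiableOn ℂ f (Metric.ball (0:ℂ) 1) ∧ ∀ z ∉ Metric.ball (0:ℂ) 1, f z = 0}

/-- The constant function `1` of `Hol(𝔻)` (normalized to vanish outside the disc). -/
def oneD : ℂ → ℂ := fun z => if z ∈ Metric.ball (0:ℂ) 1 then 1 else 0

/-- The shift `S`, `(Sf)(z) = z f(z)`, as a linear map. -/
def shiftL : (ℂ → ℂ) →ₗ[ℂ] (ℂ → ℂ) where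
  toFun f := fun z => z * f z
  map_add' f g := by funext z; simp [mul_add]
  map_smul' c f := by funext z; simp [smul_eq_mul]; ring

/-- Division: `f_λ(z) = (f(z) - f(λ))/(z - λ)` for `z ≠ λ`, `f_λ(λ) = f'(λ)`,
normalized to vanish outside the disc.  `fdivB 0` is the backward shift `T`. -/
def fdivB (lam : ℂ) (f : ℂ → ℂ) : ℂ → ℂ := fun z =>
  if z ∈ Metric.ball (0:ℂ) 1 then
    (if z = lam then deriv f lam else (f z - f lam) / (z - lam))
  else 0

/-- The reflected model of the shift `S⁻` on `H₀(ℂ ∖ 𝔻̄)`: a function `h` on `{|ζ|>1}`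
vanishing at `∞` is represented by `k(w) = h(1/w)` (holomorphic on `𝔻`, `k 0 = 0`);
`S⁻` corresponds to `k ↦ (k(z) - k(0))/z - k'(0)·1`. -/
def negShiftF (k : ℂ → ℂ) : ℂ → ℂ := fun z => fdivB 0 k z - deriv k 0 * oneD z

/-- `n`-th Taylor coefficient at the origin. -/
def tCoeff (n : ℕ) (f : ℂ → ℂ) : ℂ := iteratedDeriv n f 0 / (Nat.factorial n)

theorem aux_fdivB (lam : ℂ) (hlam : lam ∈ Metric.ball (0:ℂ) 1) (f g : ℂ → ℂ) (hg : g ∈ HolDisc)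
    (h : ∀ z, f z = (z - lam) * g z) : fdivB lam f = g := by
  obtain rfl : f = fun z => (z - lam) * g z := funext h
  funext z
  unfold fdivB
  split_ifs with h1 h2
  · subst h2
    have hd : DifferentiableAt ℂ g z := hg.1.differentiableAt (Metric.isOpen_ball.mem_nhds hlam)
    have := ((hasDerivAt_id z).sub_const z).mul hd.hasDerivAt
    have h3 := this.deriv
    simp only [id, sub_self, zero_mul, one_mul, add_zero] at h3
    exact h3
  · have : z - lam ≠ 0 := sub_ne_zero.2 h2
    field_simp
    simp
  · exact (hg.2 z h1).symm

theorem aux_div (E : Submodule ℂ (ℂ → ℂ))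
    (hEhol : (E : Set (ℂ → ℂ)) ⊆ HolDisc)
    (TE : ↥E →ₗ[ℂ] ↥E) (hTE : ∀ f : ↥E, (↑(TE f) : ℂ → ℂ) = fdivB 0 ↑f)
    (hbij : ∀ μ ∈ Metric.ball (0:ℂ) 1,
      Function.Bijective ((LinearMap.id : ↥E →ₗ[ℂ] ↥E) - μ • TE))
    (lam : ℂ) (hlam : lam ∈ Metric.ball (0:ℂ) 1) (f : ℂ → ℂ) (hf : f ∈ E) (h0 : f lam = 0) :
    ∃ g ∈ E, ∀ z, f z = (z - lam) * g z := by
  obtain ⟨g, hg⟩ := (hbij lam hlam).2 ⟨f, hf⟩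
  have hgz : ∀ z, (g : ℂ → ℂ) z - lam * (TE g : ℂ → ℂ) z = f z := by
    intro z
    have := congrFun (congrArg Subtype.val hg) z
    simpa using this
  have hT : ∀ z ∈ Metric.ball (0:ℂ) 1, z * (TE g : ℂ → ℂ) z = (g : ℂ → ℂ) z - (g : ℂ → ℂ) 0 := by
    intro z hz
    rw [hTE]
    unfold fdivB
    rw [if_pos hz]
    split_ifs with h
    · subst h; simp
    · rw [sub_zero]; field_simp
  have hg0 : (g : ℂ → ℂ) 0 = 0 := by
    have h1 := hgz lam
    have h2 := hT lam hlam
    rw [h0] at h1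
    linear_combination h1 + h2
  refine ⟨TE g, (TE g).2, fun z => ?_⟩
  by_cases hz : z ∈ Metric.ball (0:ℂ) 1
  · have h1 := hgz z
    have h2 := hT z hz
    rw [hg0] at h2
    linear_combination -h1 - h2
  · rw [(hEhol hf).2 z hz, (hEhol (TE g).2).2 z hz, mul_zero]

theorem aux_nz (M : Submodule ℂ (ℂ → ℂ))
    (hMhol : (M : Set (ℂ → ℂ)) ⊆ HolDisc) (hM0 : M ≠ ⊥)
    (lam : ℂ) (hlam : lam ∈ Metric.ball (0:ℂ) 1)
    (hdiv : ∀ f ∈ M, f lam = 0 → ∃ g ∈ M, ∀ z, f z = (z - lam) * g z) :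
    ∃ h ∈ M, h lam ≠ 0 := by
  by_contra! hall
  apply hM0
  rw [Submodule.eq_bot_iff]
  intro f hf
  have key : ∀ n : ℕ, ∃ g ∈ M, ∀ z, f z = (z - lam) ^ n * g z := by
    intro n
    induction n with
    | zero => exact ⟨f, hf, by simp⟩
    | succ n ih =>
      obtain ⟨g, hg, h⟩ := ih
      obtain ⟨k, hk, h'⟩ := hdiv g hg (hall g hg)
      exact ⟨k, hk, fun z => by rw [h, h', pow_succ]; ring⟩
  have han : ∀ g ∈ M, AnalyticOnNhd ℂ g (Metric.ball 0 1) := fun g hg =>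
    (hMhol hg).1.analyticOnNhd Metric.isOpen_ball
  have hord : analyticOrderAt f lam = ⊤ := by
    rw [ENat.eq_top_iff_forall_ge]
    intro n
    rw [natCast_le_analyticOrderAt (han f hf lam hlam)]
    obtain ⟨g, hg, h⟩ := key n
    exact ⟨g, han g hg lam hlam, Filter.Eventually.of_forall fun z => by simpa using h z⟩
  rw [analyticOrderAt_eq_top] at hord
  have := (han f hf).eqOn_zero_of_preconnected_of_eventuallyEq_zero
    (convex_ball (0:ℂ) 1).isPreconnected hlam hord
  funext z
  by_cases hz : z ∈ Metric.ball (0:ℂ) 1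
  · exact this hz
  · exact (hMhol hf).2 z hz

/-- (Proposition 2.5 (iii)) -/
theorem statement3
    (E M : Submodule ℂ (ℂ → ℂ))
    (hEhol : (E : Set (ℂ → ℂ)) ⊆ HolDisc) (hE0 : E ≠ ⊥)
    (hES : ∀ f ∈ E, shiftL f ∈ E)
    (TE : ↥E →ₗ[ℂ] ↥E) (hTE : ∀ f : ↥E, (↑(TE f) : ℂ → ℂ) = fdivB 0 ↑f)
    (hbij : ∀ μ ∈ Metric.ball (0:ℂ) 1,
      Function.Bijective ((LinearMap.id : ↥E →ₗ[ℂ] ↥E) - μ • TE))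
    (lam : ℂ) (hlam : lam ∈ Metric.ball (0:ℂ) 1)
    (hME : M ≤ E) (hM0 : M ≠ ⊥) (hMne : M ≠ E)
    (hMS : ∀ f ∈ M, shiftL f ∈ M)
    (SM : (↥E ⧸ M.comap E.subtype) →ₗ[ℂ] (↥E ⧸ M.comap E.subtype))
    (hSM : ∀ f : ↥E,
      SM ((M.comap E.subtype).mkQ f) = (M.comap E.subtype).mkQ (shiftL.restrict hES f)) :
    -- division property at λ iff S_M - λ is one-to-one
    ((∀ f ∈ M, f lam = 0 → fdivB lam f ∈ M) ↔
      Function.Injective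
        ⇑(SM - lam • (LinearMap.id : (↥E ⧸ M.comap E.subtype) →ₗ[ℂ] (↥E ⧸ M.comap E.subtype))))
    -- and in this situation S_M - λ is a bijection, with inverse U_λ satisfying
    -- U_λ ∘ π ∘ (S|E - λ) = π
    ∧ ((∀ f ∈ M, f lam = 0 → fdivB lam f ∈ M) →
        Function.Bijective
          ⇑(SM - lam • (LinearMap.id : (↥E ⧸ M.comap E.subtype) →ₗ[ℂ] (↥E ⧸ M.comap E.subtype)))
        ∧ ∃ U : (↥E ⧸ M.comap E.subtype) →ₗ[ℂ] (↥E ⧸ M.comap E.subtype),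
            (∀ q, U ((SM - lam • (LinearMap.id :
                (↥E ⧸ M.comap E.subtype) →ₗ[ℂ] (↥E ⧸ M.comap E.subtype))) q) = q)
            ∧ (∀ q, (SM - lam • (LinearMap.id :
                (↥E ⧸ M.comap E.subtype) →ₗ[ℂ] (↥E ⧸ M.comap E.subtype))) (U q) = q)
            ∧ (∀ f : ↥E,
                U ((M.comap E.subtype).mkQ (shiftL.restrict hES f - lam • f)) =
                  (M.comap E.subtype).mkQ f)) := by
  have hMhol : (M : Set (ℂ → ℂ)) ⊆ HolDisc := fun f hf => hEhol (hME hf)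
  have hD := aux_div E hEhol TE hTE hbij lam hlam
  have hval : ∀ f : ↥E, ∀ z, ((shiftL.restrict hES f - lam • f : ↥E) : ℂ → ℂ) z
      = (z - lam) * (f : ℂ → ℂ) z := by
    intro f z
    simp [shiftL, LinearMap.restrict_apply]
    ring
  have hL : ∀ f : ↥E, (SM - lam • (LinearMap.id :
      (↥E ⧸ M.comap E.subtype) →ₗ[ℂ] (↥E ⧸ M.comap E.subtype))) ((M.comap E.subtype).mkQ f)
      = (M.comap E.subtype).mkQ (shiftL.restrict hES f - lam • f) := by
    intro f
    rw [LinearMap.sub_apply, hSM, map_sub, map_smul]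
    rfl
  have hmk : ∀ f : ↥E, (M.comap E.subtype).mkQ f = 0 ↔ (f : ℂ → ℂ) ∈ M := by
    intro f
    rw [Submodule.mkQ_apply, Submodule.Quotient.mk_eq_zero]
    rfl
  have hinj : (∀ f ∈ M, f lam = 0 → fdivB lam f ∈ M) ↔
      Function.Injective
        ⇑(SM - lam • (LinearMap.id :
          (↥E ⧸ M.comap E.subtype) →ₗ[ℂ] (↥E ⧸ M.comap E.subtype))) := by
    constructor
    · intro hdiv
      rw [injective_iff_map_eq_zero]
      intro q hq
      obtain ⟨f, rfl⟩ := (M.comap E.subtype).mkQ_surjective q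
      rw [hL, hmk] at hq
      rw [hmk]
      have h1 := hdiv _ hq (by rw [hval]; simp)
      rwa [aux_fdivB lam hlam _ _ (hEhol f.2) (hval f)] at h1
    · intro hi f hf h0
      obtain ⟨g, hg, h⟩ := hD f (hME hf) h0
      rw [aux_fdivB lam hlam f g (hEhol hg) h]
      rw [injective_iff_map_eq_zero] at hi
      refine (hmk ⟨g, hg⟩).1 (hi _ ?_)
      rw [hL, hmk]
      convert hf using 1
      funext z
      rw [hval, h]
  refine ⟨hinj, fun hdiv => ?_⟩
  have hbijL : Function.Bijective
      ⇑(SM - lam • (LinearMap.id :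
        (↥E ⧸ M.comap E.subtype) →ₗ[ℂ] (↥E ⧸ M.comap E.subtype))) := by
    refine ⟨hinj.1 hdiv, fun q => ?_⟩
    obtain ⟨f, rfl⟩ := (M.comap E.subtype).mkQ_surjective q
    obtain ⟨h, hh, hne⟩ := aux_nz M hMhol hM0 lam hlam (by
      intro f hf h0
      obtain ⟨g, hg, h⟩ := hD f (hME hf) h0
      refine ⟨g, ?_, h⟩
      rw [← aux_fdivB lam hlam f g (hEhol hg) h]
      exact hdiv f hf h0)
    obtain ⟨k, hk, hkz⟩ := hD ((f : ℂ → ℂ) - ((f : ℂ → ℂ) lam / h lam) • h)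
      (E.sub_mem f.2 (E.smul_mem _ (hME hh))) (by simp [hne])
    refine ⟨(M.comap E.subtype).mkQ ⟨k, hk⟩, ?_⟩
    rw [hL, ← sub_eq_zero, ← map_sub, hmk]
    have : ((shiftL.restrict hES ⟨k, hk⟩ - lam • ⟨k, hk⟩ - f : ↥E) : ℂ → ℂ)
        = (-((f : ℂ → ℂ) lam / h lam)) • h := by
      funext z
      have h1 := hval ⟨k, hk⟩ z
      have h2 := hkz z
      rw [Submodule.coe_sub, Pi.sub_apply, h1]
      simp only [Pi.sub_apply, Pi.smul_apply, smul_eq_mul] at h2 ⊢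
      linear_combination -h2
    rw [this]
    exact M.smul_mem _ hh
  let e := LinearEquiv.ofBijective _ hbijL
  refine ⟨hbijL, e.symm.toLinearMap, fun q => e.symm_apply_apply q,
    fun q => e.apply_symm_apply q, fun f => ?_⟩
  rw [← hL]
  exact e.symm_apply_apply _
end
end

section
/- Let E ∈ 𝓔 and let M ≠ {0} be a closed linear subspace of E. Then M has the division property if and only if the following two conditions hold: (i) Z(M) = ∅; (ii) the quotient space M/(M ∩ S(M)) has dimension 1. -/
noncomputable section

open Metric Set Filter Topology
open scoped Classical

lemma fdivB_eq_of_mul {lam : ℂ} (hl : lam ∈ Metric.ball (0:ℂ) 1) {f u : ℂ → ℂ}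
    (hu : u ∈ HolDisc)
    (h : ∀ z ∈ Metric.ball (0:ℂ) 1, (z - lam) * u z = f z - f lam) : u = fdivB lam f := by
  funext z
  unfold fdivB
  split_ifs with hz hzl
  · subst hzl
    have hd : DifferentiableAt ℂ u z := hu.1.differentiableAt (isOpen_ball.mem_nhds hz)
    have h1 : HasDerivAt (fun w => (w - z) * u w + f z) (u z) z := by
      have := ((((hasDerivAt_id z).sub_const z).mul hd.hasDerivAt).add_const (f z))
      simpa using this
    have h2 : f =ᶠ[𝓝 z] (fun w => (w - z) * u w + f z) := by
      filter_upwards [isOpen_ball.mem_nhds hz] with w hw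
      rw [h w hw]; ring
    exact ((h1.congr_of_eventuallyEq h2).deriv).symm
  · rw [← h z hz, mul_div_cancel_left₀ _ (sub_ne_zero.2 hzl)]
  · exact hu.2 z hz

lemma mul_fdivB {lam : ℂ} (f : ℂ → ℂ) {z : ℂ} (hz : z ∈ Metric.ball (0:ℂ) 1) :
    (z - lam) * fdivB lam f z = f z - f lam := by
  unfold fdivB
  rw [if_pos hz]
  split_ifs with h
  · simp [h]
  · rw [mul_div_cancel₀ _ (sub_ne_zero.2 h)]

lemma zero_mem_D : (0:ℂ) ∈ Metric.ball (0:ℂ) 1 := by simp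

lemma forward_zero
    {X : Type*} [NormedAddCommGroup X] [NormedSpace ℂ X]
    (ι : X →ₗ[ℂ] (ℂ → ℂ)) (hinj : Function.Injective ι)
    (hhol : ∀ f : X, ι f ∈ HolDisc)
    (M : Submodule ℂ X) (hM0 : M ≠ ⊥)
    (hdiv : ∀ f ∈ M, ∀ lam ∈ Metric.ball (0:ℂ) 1,
        ι f lam = 0 → ∃ g ∈ M, ι g = fdivB lam (ι f)) :
    ∀ lam ∈ Metric.ball (0:ℂ) 1, ∃ f ∈ M, ι f lam ≠ 0 := by
  intro lam hl
  by_contra hcon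
  push Not at hcon
  obtain ⟨f, hf, hf0⟩ := M.ne_bot_iff.1 hM0
  have key : ∀ n : ℕ, ∃ g ∈ M, ∀ z ∈ Metric.ball (0:ℂ) 1, ι f z = (z - lam)^n * ι g z := by
    intro n
    induction n with
    | zero => exact ⟨f, hf, by simp⟩
    | succ n ih =>
      obtain ⟨g, hg, hgz⟩ := ih
      obtain ⟨k, hk, hkz⟩ := hdiv g hg lam hl (hcon g hg)
      refine ⟨k, hk, fun z hz => ?_⟩
      have := mul_fdivB (lam := lam) (ι g) hz
      rw [← hkz, hcon g hg, sub_zero] at this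
      rw [hgz z hz, ← this]; ring
  have han : ∀ g : X, AnalyticOnNhd ℂ (ι g) (Metric.ball (0:ℂ) 1) := fun g =>
    (hhol g).1.analyticOnNhd isOpen_ball
  have htop : analyticOrderAt (ι f) lam = ⊤ := by
    rw [ENat.eq_top_iff_forall_ge]
    intro n
    rw [natCast_le_analyticOrderAt (han f lam hl)]
    obtain ⟨g, hg, hgz⟩ := key n
    refine ⟨ι g, han g lam hl, ?_⟩
    filter_upwards [isOpen_ball.mem_nhds hl] with w hw
    simpa using hgz w hw
  rw [analyticOrderAt_eq_top] at htop
  have := (han f).eqOn_zero_of_preconnected_of_eventuallyEq_zero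
    (convex_ball (0:ℂ) 1).isPreconnected hl htop
  apply hf0
  apply hinj
  rw [map_zero]
  funext z
  by_cases hz : z ∈ Metric.ball (0:ℂ) 1
  · exact this hz
  · exact (hhol f).2 z hz

/-- evaluation at 0 on M -/
def evM {X : Type*} [NormedAddCommGroup X] [NormedSpace ℂ X]
    (ι : X →ₗ[ℂ] (ℂ → ℂ)) (M : Submodule ℂ X) : M →ₗ[ℂ] ℂ :=
  (LinearMap.proj (0:ℂ)).comp (ι.comp M.subtype)

lemma sub_le_ker
    {X : Type*} [NormedAddCommGroup X] [NormedSpace ℂ X]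
    (ι : X →ₗ[ℂ] (ℂ → ℂ)) (Sb : X →L[ℂ] X)
    (hSb : ∀ f : X, ι (Sb f) = shiftL (ι f)) (M : Submodule ℂ X) :
    Submodule.comap M.subtype (M ⊓ Submodule.map Sb.toLinearMap M) ≤ LinearMap.ker (evM ι M) := by
  intro x hx
  obtain ⟨-, y, hy, hyx⟩ := hx
  change Sb y = x at hyx
  change ι x 0 = 0
  rw [← hyx, hSb]
  simp [shiftL]

lemma shift_fdiv
    {X : Type*} [NormedAddCommGroup X] [NormedSpace ℂ X]
    (ι : X →ₗ[ℂ] (ℂ → ℂ)) (hinj : Function.Injective ι)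
    (hhol : ∀ f : X, ι f ∈ HolDisc) (Sb : X →L[ℂ] X)
    (hSb : ∀ f : X, ι (Sb f) = shiftL (ι f)) {f g : X} (hf : ι f 0 = 0)
    (hg : ι g = fdivB 0 (ι f)) : Sb g = f := by
  apply hinj
  rw [hSb]
  funext z
  change z * ι g z = ι f z
  by_cases hz : z ∈ Metric.ball (0:ℂ) 1
  · have := mul_fdivB (lam := 0) (ι f) hz
    rw [hg]; simpa [hf] using this
  · rw [(hhol f).2 z hz, (hhol g).2 z hz, mul_zero]

lemma resolvent_diff {X : Type*} [NormedAddCommGroup X] [NormedSpace ℂ X] [CompleteSpace X]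
    (Tb : X →L[ℂ] X) (hTrad : spectralRadius ℂ Tb ≤ 1) :
    (∀ z ∈ Metric.ball (0:ℂ) 1, IsUnit (1 - z • Tb)) ∧
    DifferentiableOn ℂ (fun z : ℂ => Ring.inverse (1 - z • Tb)) (Metric.ball (0:ℂ) 1) := by
  have hu : ∀ z ∈ Metric.ball (0:ℂ) 1, IsUnit (1 - z • Tb) := by
    intro z hz
    apply spectrum.isUnit_one_sub_smul_of_lt_inv_radius
    have h1 : (1:ENNReal) ≤ (spectralRadius ℂ Tb)⁻¹ := by
      rw [ENNReal.one_le_inv]; exact hTrad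
    refine lt_of_lt_of_le ?_ h1
    have : ‖z‖ < 1 := by simpa using hz
    exact_mod_cast this
  refine ⟨hu, fun z hz => ?_⟩
  have H₁ : Differentiable ℂ fun w : ℂ => 1 - w • Tb :=
    (differentiable_id.smul_const Tb).const_sub 1
  exact (DifferentiableAt.comp z (differentiableAt_inverse (hu z hz))
    H₁.differentiableAt).differentiableWithinAt

lemma eventually_unit {Y : Type*} [NormedAddCommGroup Y] [NormedSpace ℂ Y] [CompleteSpace Y]
    (B : Y →L[ℂ] Y) : ∀ᶠ lam in 𝓝 (0:ℂ), IsUnit (1 - lam • B) := by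
  have hc : Continuous fun lam : ℂ => ‖lam‖ * ‖B‖ := by fun_prop
  have h0 := hc.tendsto 0
  simp only [zero_mul, norm_zero] at h0
  filter_upwards [h0.eventually (gt_mem_nhds one_pos)] with lam hlam
  apply isUnit_one_sub_of_norm_lt_one
  rw [norm_smul]; exact hlam

/-- Local division near 0. -/
lemma local_div
    {X : Type*} [NormedAddCommGroup X] [NormedSpace ℂ X] [CompleteSpace X]
    (ι : X →ₗ[ℂ] (ℂ → ℂ)) (hinj : Function.Injective ι)
    (hhol : ∀ f : X, ι f ∈ HolDisc)
    (Sb Tb : X →L[ℂ] X)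
    (hSb : ∀ f : X, ι (Sb f) = shiftL (ι f))
    (hTb : ∀ f : X, ι (Tb f) = fdivB 0 (ι f))
    (M : Submodule ℂ X) (hMc : IsClosed (M : Set X))
    (hk : ∃ f ∈ M, ι f 0 ≠ 0)
    (hdiv0 : ∀ f ∈ M, ι f 0 = 0 → Tb f ∈ M) :
    ∀ᶠ lam in 𝓝 (0:ℂ), ∀ f ∈ M, ι f lam = 0 → ∃ u ∈ M, f = Sb u - lam • u := by
  obtain ⟨k, hkM, hk0⟩ := hk
  have hdef : ∀ f : X, ι (f - Sb (Tb f)) = (ι f 0) • oneD := by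
    intro f
    rw [map_sub, hSb, hTb]
    funext z
    change ι f z - z * fdivB 0 (ι f) z = ι f 0 * oneD z
    by_cases hz : z ∈ Metric.ball (0:ℂ) 1
    · have := mul_fdivB (lam := 0) (ι f) hz
      rw [sub_zero] at this
      rw [this]; simp only [oneD, if_pos hz]; ring
    · rw [(hhol f).2 z hz]; simp only [fdivB, oneD, if_neg hz]; ring
  set e : X := k - Sb (Tb k) with he
  have hede : ∀ f : X, f - Sb (Tb f) = (ι f 0 / ι k 0) • e := by
    intro f
    apply hinj
    rw [hdef, map_smul, he, hdef, smul_smul, div_mul_cancel₀ _ hk0]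
  have he0 : e ≠ 0 := by
    intro h
    have h1 := hdef k
    rw [← he, h, map_zero] at h1
    have h2 := congrFun h1 0
    simp [oneD] at h2
    exact hk0 h2.symm
  obtain ⟨ψ, hψ⟩ : ∃ ψ : StrongDual ℂ X, ψ e = 1 := SeparatingDual.exists_eq_one he0
  -- continuous functional f ↦ f(0)/k(0)
  let ev : StrongDual ℂ X := ψ.comp (1 - Sb.comp Tb)
  have hev : ∀ f, ev f = ι f 0 / ι k 0 := by
    intro f
    change ψ (f - Sb (Tb f)) = _
    rw [hede f, map_smul, hψ, smul_eq_mul, mul_one]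
  let B : X →L[ℂ] X := Tb.comp (1 - ev.smulRight k)
  have hP0 : ∀ f, ι (f - ev f • k) 0 = 0 := by
    intro f
    rw [map_sub, map_smul, hev]
    change ι f 0 - ι f 0 / ι k 0 * ι k 0 = 0
    rw [div_mul_cancel₀ _ hk0, sub_self]
  have hB : ∀ f, B f = Tb (f - ev f • k) := fun f => rfl
  have hSB : ∀ f, Sb (B f) = f - ev f • k := by
    intro f
    exact shift_fdiv ι hinj hhol Sb hSb (hP0 f) (by rw [hB, hTb])
  have hBM : ∀ f : M, B f ∈ M := fun f =>
    hdiv0 _ (M.sub_mem f.2 (M.smul_mem _ hkM)) (hP0 f)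
  let BM : M →L[ℂ] M := (B.comp M.subtypeL).codRestrict M hBM
  have : CompleteSpace M := hMc.completeSpace_coe
  have hcont : ContinuousAt (ι k) 0 :=
    ((hhol k).1.differentiableAt (isOpen_ball.mem_nhds zero_mem_D)).continuousAt
  have hsmall := eventually_unit BM
  filter_upwards [hsmall, hcont.eventually_ne hk0] with lam hlam hklam f hf hfl
  obtain ⟨U, hU⟩ := hlam
  let g : M := (U⁻¹ : (M →L[ℂ] M)ˣ).val ⟨f, hf⟩
  have hg : (1 - lam • BM) g = ⟨f, hf⟩ := by
    rw [← hU]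
    change (U.val * (U⁻¹ : (M →L[ℂ] M)ˣ).val) ⟨f, hf⟩ = _
    rw [U.mul_inv]; rfl
  have hg' : (g : X) - lam • B g = f := congrArg Subtype.val hg
  have hfeq : f = (Sb (B g) - lam • B g) + ev g • k := by
    rw [hSB, ← hg']; abel
  have hval : ev g * ι k lam = 0 := by
    have h1 := congrFun (congrArg ι hfeq) lam
    rw [hfl, map_add, map_sub, map_smul, map_smul, hSb] at h1
    change 0 = (lam * ι (B g) lam - lam * ι (B g) lam) + ev g * ι k lam at h1
    rw [h1]; ring
  have hev0 : ev g = 0 := (mul_eq_zero.1 hval).resolve_right hklam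
  exact ⟨B g, hBM g, by rw [hev0, zero_smul, add_zero] at hfeq; exact hfeq⟩

lemma TS_eq
    {X : Type*} [NormedAddCommGroup X] [NormedSpace ℂ X]
    (ι : X →ₗ[ℂ] (ℂ → ℂ)) (hinj : Function.Injective ι)
    (hhol : ∀ f : X, ι f ∈ HolDisc)
    (Sb Tb : X →L[ℂ] X)
    (hSb : ∀ f : X, ι (Sb f) = shiftL (ι f))
    (hTb : ∀ f : X, ι (Tb f) = fdivB 0 (ι f)) (f : X) : Tb (Sb f) = f := by
  apply hinj
  rw [hTb, hSb]
  symm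
  apply fdivB_eq_of_mul zero_mem_D (hhol f)
  intro z hz
  simp [shiftL]

lemma backward
    {X : Type*} [NormedAddCommGroup X] [NormedSpace ℂ X] [CompleteSpace X]
    (ι : X →ₗ[ℂ] (ℂ → ℂ)) (hinj : Function.Injective ι)
    (hhol : ∀ f : X, ι f ∈ HolDisc)
    (Sb Tb : X →L[ℂ] X)
    (hSb : ∀ f : X, ι (Sb f) = shiftL (ι f))
    (hTb : ∀ f : X, ι (Tb f) = fdivB 0 (ι f))
    (hTrad : spectralRadius ℂ Tb ≤ 1)
    (M : Submodule ℂ X) (hMc : IsClosed (M : Set X))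
    (hZ : ∀ lam ∈ Metric.ball (0:ℂ) 1, ∃ f ∈ M, ι f lam ≠ 0)
    (hdiv0 : ∀ f ∈ M, ι f 0 = 0 → Tb f ∈ M) :
    ∀ f ∈ M, ∀ lam ∈ Metric.ball (0:ℂ) 1,
        ι f lam = 0 → ∃ g ∈ M, ι g = fdivB lam (ι f) := by
  intro f hf lam hl hfl
  obtain ⟨k, hkM, hkl⟩ := hZ lam hl
  obtain ⟨hu, hR⟩ := resolvent_diff Tb hTrad
  have hloc := local_div ι hinj hhol Sb Tb hSb hTb M hMc (hZ 0 zero_mem_D) hdiv0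
  set R : ℂ → X →L[ℂ] X := fun z => Ring.inverse (1 - z • Tb) with hRdef
  have hmem : R lam (Tb f) ∈ M := by
    by_contra hnot
    have : IsClosed (M : Set X) := hMc
    have hq0 : M.mkQL (R lam (Tb f)) ≠ 0 := by
      intro h
      exact hnot ((Submodule.Quotient.mk_eq_zero M).1 h)
    obtain ⟨ψ, hψ⟩ : ∃ ψ : StrongDual ℂ (X ⧸ M), ψ (M.mkQL (R lam (Tb f))) = 1 :=
      SeparatingDual.exists_eq_one hq0
    let φ : StrongDual ℂ X := ψ.comp M.mkQL
    have hφM : ∀ x ∈ M, φ x = 0 := by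
      intro x hx
      have : M.mkQL x = 0 := (Submodule.Quotient.mk_eq_zero M).2 hx
      change ψ (M.mkQL x) = 0
      rw [this, map_zero]
    let G : ℂ → ℂ := fun z => ι k z * φ (R z (Tb f)) - ι f z * φ (R z (Tb k))
    have hRd : ∀ x : X, DifferentiableOn ℂ (fun z => φ (R z x)) (Metric.ball (0:ℂ) 1) := by
      intro x
      exact φ.differentiable.comp_differentiableOn (hR.clm_apply (differentiableOn_const x))
    have hG : DifferentiableOn ℂ G (Metric.ball (0:ℂ) 1) :=
      ((hhol k).1.mul (hRd _)).sub ((hhol f).1.mul (hRd _))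
    have hG0 : G =ᶠ[𝓝 0] 0 := by
      filter_upwards [hloc, isOpen_ball.mem_nhds zero_mem_D] with z hz hzD
      obtain ⟨u, huM, hueq⟩ := hz (ι k z • f - ι f z • k)
        (M.sub_mem (M.smul_mem _ hf) (M.smul_mem _ hkM)) (by
          rw [map_sub, map_smul, map_smul]
          change ι k z * ι f z - ι f z * ι k z = 0
          ring)
      have h1 : Tb (ι k z • f - ι f z • k) = (1 - z • Tb) u := by
        rw [hueq, map_sub, TS_eq ι hinj hhol Sb Tb hSb hTb, map_smul]; rfl
      have h2 : R z (Tb (ι k z • f - ι f z • k)) = u := by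
        rw [h1]
        change (Ring.inverse (1 - z • Tb) * (1 - z • Tb)) u = u
        rw [Ring.inverse_mul_cancel _ (hu z hzD)]; rfl
      have h3 : G z = φ (R z (Tb (ι k z • f - ι f z • k))) := by
        simp only [map_sub, map_smul, smul_eq_mul, G]
      rw [h3, h2, hφM u huM]; rfl
    have hGl := (hG.analyticOnNhd isOpen_ball).eqOn_zero_of_preconnected_of_eventuallyEq_zero
      (convex_ball (0:ℂ) 1).isPreconnected zero_mem_D hG0 hl
    have h4 : φ (R lam (Tb f)) = 1 := hψ
    simp [G, hfl, h4] at hGl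
    exact hkl hGl
  refine ⟨_, hmem, ?_⟩
  set u := R lam (Tb f) with hudef
  have h1 : u - lam • Tb u = Tb f := by
    change (1 - lam • Tb) u = _
    rw [hudef]
    change ((1 - lam • Tb) * Ring.inverse (1 - lam • Tb)) (Tb f) = _
    rw [Ring.mul_inverse_cancel _ (hu lam hl)]; rfl
  have h2 : ∀ z ∈ Metric.ball (0:ℂ) 1, (z - lam) * ι u z = ι f z - (ι f 0 + lam * ι u 0) := by
    intro z hz
    have h3 := congrFun (congrArg ι h1) z
    rw [map_sub, map_smul, hTb, hTb] at h3
    change ι u z - lam * fdivB 0 (ι u) z = fdivB 0 (ι f) z at h3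
    have ha := mul_fdivB (lam := 0) (ι f) hz
    have hb := mul_fdivB (lam := 0) (ι u) hz
    linear_combination z * h3 + ha + lam * hb
  have h5 := h2 lam hl
  apply fdivB_eq_of_mul hl (hhol u)
  intro z hz
  rw [h2 z hz]
  linear_combination -h5

/-- (Corollary 3.5) A nonzero closed subspace `M` of `E ∈ 𝓔` has the
division property iff `Z(M) = ∅` and `dim M/(M ∩ S(M)) = 1`. -/
theorem statement9
    {X : Type*} [NormedAddCommGroup X] [NormedSpace ℂ X] [CompleteSpace X]
    (ι : X →ₗ[ℂ] (ℂ → ℂ)) (hinj : Function.Injective ι)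
    (hhol : ∀ f : X, ι f ∈ HolDisc)
    (Sb Tb : X →L[ℂ] X)
    (hSb : ∀ f : X, ι (Sb f) = shiftL (ι f))
    (hTb : ∀ f : X, ι (Tb f) = fdivB 0 (ι f))
    (hSrad : spectralRadius ℂ Sb ≤ 1) (hTrad : spectralRadius ℂ Tb ≤ 1)
    (M : Submodule ℂ X) (hMc : IsClosed (M : Set X)) (hM0 : M ≠ ⊥) :
    (∀ f ∈ M, ∀ lam ∈ Metric.ball (0:ℂ) 1,
        ι f lam = 0 → ∃ g ∈ M, ι g = fdivB lam (ι f))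
    ↔ ((∀ lam ∈ Metric.ball (0:ℂ) 1, ∃ f ∈ M, ι f lam ≠ 0)
        ∧ Module.rank ℂ
            (↥M ⧸ Submodule.comap M.subtype (M ⊓ Submodule.map Sb.toLinearMap M)) = 1) := by
  constructor
  · intro hdiv
    have hZ := forward_zero ι hinj hhol M hM0 hdiv
    refine ⟨hZ, ?_⟩
    have hker : Submodule.comap M.subtype (M ⊓ Submodule.map Sb.toLinearMap M)
        = LinearMap.ker (evM ι M) := by
      apply le_antisymm (sub_le_ker ι Sb hSb M)
      intro x hx
      have hx0 : ι x 0 = 0 := hx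
      obtain ⟨g, hg, hgx⟩ := hdiv x x.2 0 zero_mem_D hx0
      exact ⟨x.2, g, hg, shift_fdiv ι hinj hhol Sb hSb hx0 hgx⟩
    rw [hker]
    obtain ⟨k, hkM, hk⟩ := hZ 0 zero_mem_D
    have hsurj : Function.Surjective (evM ι M) :=
      LinearMap.surjective (fun h => hk (LinearMap.congr_fun h ⟨k, hkM⟩))
    have hr := ((evM ι M).quotKerEquivOfSurjective hsurj).lift_rank_eq
    rw [Module.rank_self ℂ] at hr
    simpa using hr
  · rintro ⟨hZ, hrank⟩
    refine backward ι hinj hhol Sb Tb hSb hTb hTrad M hMc hZ ?_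
    intro f hf hf0
    obtain ⟨k, hkM, hk⟩ := hZ 0 zero_mem_D
    set Q := Submodule.comap M.subtype (M ⊓ Submodule.map Sb.toLinearMap M) with hQ
    have hle : Q ≤ LinearMap.ker (evM ι M) := sub_le_ker ι Sb hSb M
    have hkQ : Q.mkQ ⟨k, hkM⟩ ≠ 0 := by
      intro h
      exact hk (hle ((Submodule.Quotient.mk_eq_zero Q).1 h))
    have hfin : Module.finrank ℂ (M ⧸ Q) = 1 := Module.finrank_eq_of_rank_eq (by simpa using hrank)
    obtain ⟨c, hc⟩ := (finrank_eq_one_iff_of_nonzero' _ hkQ).1 hfin (Q.mkQ ⟨f, hf⟩)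
    have hmem : (⟨f, hf⟩ : M) - c • ⟨k, hkM⟩ ∈ Q := by
      rw [← Submodule.Quotient.mk_eq_zero Q]
      change Q.mkQ _ = 0
      rw [map_sub, map_smul, hc, sub_self]
    have hc0 : c = 0 := by
      have h1 : ι (f - c • k) 0 = 0 := hle hmem
      rw [map_sub, map_smul] at h1
      change ι f 0 - c * ι k 0 = 0 at h1
      rw [hf0, zero_sub, neg_eq_zero] at h1
      exact (mul_eq_zero.1 h1).resolve_right hk
    rw [hc0, zero_smul, sub_zero] at hmem
    obtain ⟨-, y, hy, hyx⟩ := hmem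
    have hyx' : Sb y = f := hyx
    rw [← hyx', TS_eq ι hinj hhol Sb Tb hSb hTb]
    exact hy
end
end
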